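/- arXiv:2404.04680 — 7 statements merged into one kernel-verified Lean document; each statement's English description precedes it below -/
import Mathlib

section
/- Let G be a connected bipartite graph with parts V₁ and V₂ such that every vertex of V₁ has degree r ≥ 2 and every vertex of V₂ has degree s ≥ 2, with (r−1)(s−1) ≥ 2. If the diameter of G is at most 2m+1 (for an integer m ≥ 1), then |V₁| ≤ 1 + r(s−1)·∑_{i=0}^{m−1} ((r−1)(s−1))^i. -/
namespace SimpleGraph

variable {V : Type*} {G : SimpleGraph V}

/-- The predecessor of a vertex on a geodesic from `v`. -/
theorem Connected.exists_adj_dist_eq (hconn : G.Connected) {v u : V} {k : ℕ}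
    (h : G.dist v u = k + 1) : ∃ w, G.Adj w u ∧ G.dist v w = k := by
  obtain ⟨p, hp⟩ := hconn.exists_walk_length_eq_dist u v
  rw [dist_comm, h] at hp
  cases p with
  | nil => simp at hp
  | @cons _ w _ hadj q =>
    refine ⟨w, hadj.symm, ?_⟩
    have hle : G.dist w v ≤ q.length := dist_le q
    have htri : G.dist v u ≤ G.dist v w + G.dist w u := hconn.dist_triangle
    have hone : G.dist w u = 1 := dist_eq_one_iff_adj.mpr hadj.symm
    rw [Walk.length_cons] at hp
    rw [dist_comm] at hle
    omega

theorem Walk.even_length_iff_of_bipartition {S : Set V}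
    (hS : ∀ u v, G.Adj u v → (u ∈ S ↔ v ∉ S)) {u v : V} (p : G.Walk u v) :
    Even p.length ↔ (u ∈ S ↔ v ∈ S) := by
  induction p with
  | nil => simp
  | cons h q ih =>
    have := hS _ _ h
    rw [Walk.length_cons, Nat.even_add_one, ih]
    tauto

variable [Fintype V]

/-- The set of vertices at distance exactly `k` from `v`. -/
noncomputable def distSphere (G : SimpleGraph V) (v : V) (k : ℕ) : Finset V :=
  {u | G.dist v u = k}

@[simp]
theorem mem_distSphere {v u : V} {k : ℕ} : u ∈ G.distSphere v k ↔ G.dist v u = k := by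
  simp [distSphere]

theorem Connected.card_distSphere_zero (hconn : G.Connected) (v : V) :
    (G.distSphere v 0).card = 1 := by
  rw [Finset.card_eq_one]
  exact ⟨v, by ext u; simp [hconn.dist_eq_zero_iff, eq_comm]⟩

variable [DecidableRel G.Adj]

theorem card_distSphere_one (v : V) : (G.distSphere v 1).card = G.degree v := by
  rw [← card_neighborFinset_eq_degree]
  congr 1
  ext u
  simp

theorem Connected.card_distSphere_add_two_le (hconn : G.Connected) {v : V} {k d : ℕ}
    (hd : ∀ w, G.dist v w = k + 1 → G.degree w = d) :
    (G.distSphere v (k + 2)).card ≤ (G.distSphere v (k + 1)).card * (d - 1) := by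
  classical
  have hsub : G.distSphere v (k + 2) ⊆ (G.distSphere v (k + 1)).biUnion
      fun w ↦ {u ∈ G.neighborFinset w | G.dist v u = k + 2} := by
    intro u hu
    rw [mem_distSphere] at hu
    obtain ⟨w, hadj, hw⟩ := hconn.exists_adj_dist_eq hu
    simp only [Finset.mem_biUnion, mem_distSphere, Finset.mem_filter, mem_neighborFinset]
    exact ⟨w, hw, hadj, hu⟩
  refine (Finset.card_le_card hsub).trans (Finset.card_biUnion_le_card_mul _ _ _ ?_)
  intro w hw
  rw [mem_distSphere] at hw
  obtain ⟨x, hadj, hx⟩ := hconn.exists_adj_dist_eq hw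
  have hlt : ({u ∈ G.neighborFinset w | G.dist v u = k + 2} : Finset V).card
      < (G.neighborFinset w).card := by
    refine Finset.card_lt_card (Finset.filter_ssubset.mpr ⟨x, ?_, by omega⟩)
    simpa using hadj.symm
  rw [card_neighborFinset_eq_degree, hd w hw] at hlt
  omega

end SimpleGraph

/-- If a connected bipartite graph with parts `V1` (degree `r ≥ 2`) and `V2` (degree `s ≥ 2`),
with `(r-1)(s-1) ≥ 2`, has diameter at most `2m+1`, then
`|V1| ≤ 1 + r(s-1)·∑_{i=0}^{m-1} ((r-1)(s-1))^i`. -/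
theorem stmt_0 {V : Type*} [Fintype V] (G : SimpleGraph V) [DecidableRel G.Adj]
    (V1 V2 : Finset V) (r s m : ℕ)
    (hm : 1 ≤ m) (hr : 2 ≤ r) (hs : 2 ≤ s) (hrs : 2 ≤ (r - 1) * (s - 1))
    (hpart : ∀ v : V, v ∈ V1 ↔ v ∉ V2)
    (hbip : ∀ u v : V, G.Adj u v → (u ∈ V1 ∧ v ∈ V2) ∨ (u ∈ V2 ∧ v ∈ V1))
    (hconn : G.Connected)
    (hdeg1 : ∀ v ∈ V1, G.degree v = r)
    (hdeg2 : ∀ v ∈ V2, G.degree v = s)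
    (hdiam : ∀ u v : V, G.dist u v ≤ 2 * m + 1) :
    V1.card ≤ 1 + r * (s - 1) * ∑ i ∈ Finset.range m, ((r - 1) * (s - 1)) ^ i := by
  classical
  have hS : ∀ u v, G.Adj u v → (u ∈ (V1 : Set V) ↔ v ∉ (V1 : Set V)) := by
    intro u v h
    have := hbip u v h
    have := hpart u
    have := hpart v
    simp only [Finset.mem_coe]
    tauto
  rcases V1.eq_empty_or_nonempty with rfl | ⟨v, hv⟩
  · simp
  have hparity : ∀ u, Even (G.dist v u) ↔ u ∈ V1 := by
    intro u
    obtain ⟨p, hp⟩ := hconn.exists_walk_length_eq_dist v u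
    rw [← hp, p.even_length_iff_of_bipartition hS]
    simp [hv]
  have hdegEven : ∀ w, Even (G.dist v w) → G.degree w = r := fun w hw ↦
    hdeg1 w ((hparity w).mp hw)
  have hdegOdd : ∀ w, ¬ Even (G.dist v w) → G.degree w = s := fun w hw ↦
    hdeg2 w (by
      rw [hparity, hpart] at hw
      exact not_not.mp hw)
  have hsphere : ∀ i, (G.distSphere v (2 * i + 2)).card
      ≤ r * (s - 1) * ((r - 1) * (s - 1)) ^ i := by
    intro i
    have hodd : (G.distSphere v (2 * i + 2)).card
        ≤ (G.distSphere v (2 * i + 1)).card * (s - 1) :=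
      hconn.card_distSphere_add_two_le fun w hw ↦ hdegOdd w (by rw [hw]; grind)
    induction i with
    | zero =>
      rw [SimpleGraph.card_distSphere_one, hdeg1 v hv] at hodd
      simpa using hodd
    | succ i ih =>
      have heven : (G.distSphere v (2 * (i + 1) + 1)).card
          ≤ (G.distSphere v (2 * i + 2)).card * (r - 1) :=
        hconn.card_distSphere_add_two_le fun w hw ↦ hdegEven w (by rw [hw]; grind)
      have ih' := ih
        (hconn.card_distSphere_add_two_le fun w hw ↦ hdegOdd w (by rw [hw]; grind))
      calc (G.distSphere v (2 * (i + 1) + 2)).card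
          ≤ (G.distSphere v (2 * (i + 1) + 1)).card * (s - 1) := hodd
        _ ≤ r * (s - 1) * ((r - 1) * (s - 1)) ^ i * (r - 1) * (s - 1) := by
          gcongr
          exact heven.trans (by gcongr)
        _ = r * (s - 1) * ((r - 1) * (s - 1)) ^ (i + 1) := by ring
  have hcover : V1 ⊆ (Finset.range (m + 1)).biUnion fun i ↦ G.distSphere v (2 * i) := by
    intro u hu
    obtain ⟨j, hj⟩ := (hparity u).mpr hu
    have := hdiam v u
    simp only [Finset.mem_biUnion, Finset.mem_range, SimpleGraph.mem_distSphere]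
    exact ⟨j, by omega, by omega⟩
  calc V1.card ≤ ∑ i ∈ Finset.range (m + 1), (G.distSphere v (2 * i)).card :=
        (Finset.card_le_card hcover).trans Finset.card_biUnion_le
    _ = 1 + ∑ i ∈ Finset.range m, (G.distSphere v (2 * i + 2)).card := by
        rw [Finset.sum_range_succ', mul_zero, hconn.card_distSphere_zero, add_comm]
        rfl
    _ ≤ 1 + r * (s - 1) * ∑ i ∈ Finset.range m, ((r - 1) * (s - 1)) ^ i := by
        rw [Finset.mul_sum]
        gcongr with i
        exact hsphere i
end

section
/- Let G be an [r,s;3]-bigraph with parts V₁ and V₂ (degrees r and s respectively), with r ≥ s ≥ 2, such that |V₂| = s(r−1). Then either r = s or r = s². -/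
/-- Fisher-type inequality: a `β × α` matrix with row sums `s > 2` and column sums `r`, whose Gram
matrix has diagonal entries `s` and off-diagonal entries at least `1`, has at least as many columns
as rows when it has `s * (r - 1)` rows. -/
lemma Matrix.card_le_card_of_one_le_gram {α β : Type*} [Fintype α] [Fintype β]
    (M : Matrix β α ℝ) (r s : ℝ) (hs : 2 < s)
    (hrow : ∀ v, ∑ u, M v u = s) (hcol : ∀ u, ∑ v, M v u = r)
    (hdiag : ∀ v, (M * M.transpose) v v = s)
    (hoff : ∀ v w, v ≠ w → 1 ≤ (M * M.transpose) v w)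
    (hcard : (Fintype.card β : ℝ) = s * (r - 1)) :
    Fintype.card β ≤ Fintype.card α := by
  classical
  set C : Matrix β β ℝ := M * M.transpose - Matrix.of fun _ _ => 1 with hC
  have hrowC (v : β) : ∑ w, C v w = s := by
    have hgram : ∑ w, (M * M.transpose) v w = s * r := by
      simp only [Matrix.mul_apply, Matrix.transpose_apply]
      rw [Finset.sum_comm]
      simp only [← Finset.mul_sum, hcol]
      rw [← Finset.sum_mul, hrow]
    simp only [hC, Matrix.sub_apply, Matrix.of_apply, Finset.sum_sub_distrib, hgram]
    simp [hcard]
    ring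
  have hdiagC (v : β) : C v v = s - 1 := by simp [hC, hdiag]
  have hdet : C.det ≠ 0 := by
    refine det_ne_zero_of_sum_row_lt_diag fun v => ?_
    have habs : ∑ w ∈ Finset.univ.erase v, ‖C v w‖ = ∑ w ∈ Finset.univ.erase v, C v w := by
      refine Finset.sum_congr rfl fun w hw => ?_
      have := hoff v w (Finset.ne_of_mem_erase hw).symm
      rw [Real.norm_eq_abs, abs_of_nonneg]
      simpa [hC] using this
    have hsplit := Finset.add_sum_erase Finset.univ (C v) (Finset.mem_univ v)
    rw [hrowC, hdiagC] at hsplit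
    rw [habs, hdiagC, Real.norm_eq_abs, abs_of_pos (by linarith)]
    linarith
  have hinj : Function.Injective M.transpose.mulVecLin := by
    rw [← LinearMap.ker_eq_bot, LinearMap.ker_eq_bot']
    intro x hx
    rw [Matrix.mulVecLin_apply] at hx
    have hsum : ∑ v, x v = 0 := by
      have h : ∑ u, M.transpose.mulVec x u = s * ∑ v, x v := by
        simp only [Matrix.mulVec, dotProduct, Matrix.transpose_apply]
        rw [Finset.sum_comm, Finset.mul_sum]
        simp only [← Finset.sum_mul, hrow]
      rw [hx] at h
      simp only [Pi.zero_apply, Finset.sum_const_zero] at h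
      rcases mul_eq_zero.mp h.symm with h | h
      · linarith
      · exact h
    refine Matrix.eq_zero_of_mulVec_eq_zero hdet ?_
    rw [hC, Matrix.sub_mulVec, ← Matrix.mulVec_mulVec, hx, Matrix.mulVec_zero]
    ext v
    simp [Matrix.mulVec, dotProduct, hsum]
  simpa using LinearMap.finrank_le_finrank_of_injective hinj

namespace SimpleGraph

variable {V : Type*} {G : SimpleGraph V}

lemma sum_adj_eq_degree [Fintype V] [DecidableRel G.Adj] (W : Finset V) (v : V)
    (h : ∀ u, G.Adj v u → u ∈ W) :
    ∑ u : W, (if G.Adj v u then (1 : ℝ) else 0) = G.degree v := by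
  rw [Finset.sum_coe_sort W fun u => if G.Adj v u then (1 : ℝ) else 0, Finset.sum_boole,
    ← card_neighborFinset_eq_degree]
  congr 2
  ext u
  simpa using h u

/-- In a connected bipartite graph, distinct vertices of one part at distance at most `3` have a
common neighbor. -/
lemma exists_common_adj_of_dist_le_three {V1 V2 : Set V} (hbip : G.IsBipartiteWith V1 V2)
    (hconn : G.Connected) {v w : V} (hv : v ∈ V2) (hw : w ∈ V2) (hne : v ≠ w)
    (hdist : G.dist v w ≤ 3) : ∃ u, G.Adj v u ∧ G.Adj w u := by
  have h12 {a b : V} (ha : a ∈ V1) (hab : G.Adj a b) : b ∈ V2 := hbip.mem_of_mem_adj ha hab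
  have h21 {a b : V} (ha : a ∈ V2) (hab : G.Adj a b) : b ∈ V1 := hbip.symm.mem_of_mem_adj ha hab
  have hdisj : w ∉ V1 := fun h => Set.disjoint_left.mp hbip.disjoint h hw
  obtain ⟨p, hp⟩ := hconn.exists_walk_length_eq_dist v w
  rw [← hp] at hdist
  match p, hdist with
  | .nil, _ => exact absurd rfl hne
  | .cons h .nil, _ => exact absurd (h21 hv h) hdisj
  | .cons h (.cons h₂ .nil), _ => exact ⟨_, h, h₂.symm⟩
  | .cons h (.cons h₂ (.cons h₃ .nil)), _ => exact absurd (h21 (h12 (h21 hv h) h₂) h₃) hdisj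
  | .cons _ (.cons _ (.cons _ (.cons _ _))), hlen =>
    simp only [Walk.length_cons] at hlen
    omega

end SimpleGraph

/-- If `G` is an `[r,s;3]`-bigraph (connected bipartite biregular with degrees `r ≥ s ≥ 2`
and diameter 3) with `|V2| = s(r-1)`, then either `r = s` or `r = s²`. -/
theorem stmt_1 {V : Type*} [Fintype V] (G : SimpleGraph V) [DecidableRel G.Adj]
    (V1 V2 : Finset V) (r s : ℕ) (hrs : s ≤ r) (hs : 2 ≤ s)
    (hpart : ∀ v : V, v ∈ V1 ↔ v ∉ V2)
    (hbip : ∀ u v : V, G.Adj u v → (u ∈ V1 ∧ v ∈ V2) ∨ (u ∈ V2 ∧ v ∈ V1))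
    (hconn : G.Connected)
    (hdeg1 : ∀ v ∈ V1, G.degree v = r)
    (hdeg2 : ∀ v ∈ V2, G.degree v = s)
    (hdiam : G.diam = 3)
    (hcard : V2.card = s * (r - 1)) :
    r = s ∨ r = s ^ 2 := by
  classical
  have hB : G.IsBipartiteWith (V1 : Set V) (V2 : Set V) :=
    ⟨Set.disjoint_left.mpr fun v hv => by simpa using (hpart v).mp (by simpa using hv),
      fun u v h => by simpa using hbip u v h⟩
  have hedges : V1.card * r = V2.card * s := by
    have h := SimpleGraph.isBipartiteWith_sum_degrees_eq hB
    rwa [Finset.sum_congr rfl hdeg1, Finset.sum_congr rfl hdeg2, Finset.sum_const,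
      Finset.sum_const, smul_eq_mul, smul_eq_mul] at h
  have hN1 (v : V) (hv : v ∈ V1) (u : V) (h : G.Adj v u) : u ∈ V2 := by
    simpa using hB.mem_of_mem_adj (by simpa using hv) h
  have hN2 (v : V) (hv : v ∈ V2) (u : V) (h : G.Adj v u) : u ∈ V1 := by
    simpa using hB.symm.mem_of_mem_adj (by simpa using hv) h
  obtain ⟨k, rfl⟩ : ∃ k, r = k + 1 := ⟨r - 1, by omega⟩
  rw [Nat.add_sub_cancel] at hcard
  have hk : 0 < k := by omega
  rcases hs.eq_or_lt with rfl | hs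
  · have hdvd : k + 1 ∣ k * 4 := ⟨V1.card, by rw [hcard] at hedges; linarith⟩
    have hdvd4 : k + 1 ∣ 4 := (Nat.coprime_self_add_left.mpr (by simp)).dvd_of_dvd_mul_left hdvd
    have hk4 := Nat.le_of_dvd (by norm_num) hdvd4
    have hk3 : k ≤ 3 := by omega
    interval_cases k <;> omega
  · left
    have hle : V2.card ≤ V1.card := by
      let M : Matrix V2 V1 ℝ := .of fun v u => if G.Adj v u then 1 else 0
      have hrow (v : V2) : ∑ u, M v u = s := by
        rw [← hdeg2 v v.2]
        exact SimpleGraph.sum_adj_eq_degree V1 v (hN2 v v.2)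
      have h := M.card_le_card_of_one_le_gram ((k + 1 : ℕ) : ℝ) s (by exact_mod_cast hs) hrow
        (fun u => by
          rw [← hdeg1 u u.2, ← SimpleGraph.sum_adj_eq_degree V2 u (hN1 u u.2)]
          simp [M, G.adj_comm])
        (fun v => by
          rw [← hrow v, Matrix.mul_apply]
          exact Finset.sum_congr rfl fun u _ => by simp [M])
        (fun v w hvw => by
          have hdist : G.dist v w ≤ 3 := hdiam ▸ SimpleGraph.dist_le_diam
            (SimpleGraph.ediam_ne_top_of_diam_ne_zero (by omega))
          obtain ⟨u, hvu, hwu⟩ := SimpleGraph.exists_common_adj_of_dist_le_three hB hconn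
            (by simp) (by simp) (Subtype.coe_ne_coe.mpr hvw) hdist
          let u₀ : V1 := ⟨u, hN2 v v.2 u hvu⟩
          calc (1 : ℝ) = M v u₀ * M w u₀ := by simp [M, u₀, hvu, hwu]
            _ ≤ ∑ x, M v x * M w x := Finset.single_le_sum (f := fun x => M v x * M w x)
                (fun x _ => by simp only [M, Matrix.of_apply]; positivity) (Finset.mem_univ u₀))
        (by simp [hcard])
      simpa using h
    have hmul : V2.card * (k + 1) ≤ V2.card * s := hedges ▸ Nat.mul_le_mul_right _ hle
    have hpos : 0 < V2.card := hcard ▸ by positivity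
    exact le_antisymm (Nat.le_of_mul_le_mul_left hmul hpos) hrs
end

section
/- Let G be an [r,s;3]-bigraph with parts V₁ and V₂ (degrees r and s respectively), with r ≥ s ≥ 2, such that |V₂| = s(r−1). Then for every vertex u ∈ V₂ there exists a unique vertex u' ∈ V₂ with u' ≠ u such that |N(u) ∩ N(u')| = 2 (the repeat of u); moreover, every other vertex w ∈ V₂ with w ≠ u and w ≠ u' satisfies |N(u) ∩ N(w)| = 1. -/
/-- If the values of `f` on `S` are positive and sum to `#S + 1`, then `f` takes the value `2`
exactly once on `S`, and the value `1` elsewhere. -/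
theorem Finset.exists_eq_two_of_sum_eq_card_add_one {ι : Type*} [DecidableEq ι] (S : Finset ι)
    (f : ι → ℕ) (hpos : ∀ w ∈ S, 1 ≤ f w) (hsum : ∑ w ∈ S, f w = S.card + 1) :
    ∃ a ∈ S, f a = 2 ∧ ∀ w ∈ S, w ≠ a → f w = 1 := by
  obtain ⟨a, ha, ha2⟩ : ∃ a ∈ S, 1 < f a := by
    by_contra! h
    have : ∑ w ∈ S, f w ≤ S.card := by simpa using Finset.sum_le_card_nsmul S f 1 h
    omega
  have hcard := Finset.card_erase_add_one ha
  have hsplit := Finset.add_sum_erase S f ha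
  have hrest : (S.erase a).card ≤ ∑ w ∈ S.erase a, f w := by
    simpa using Finset.card_nsmul_le_sum (S.erase a) f 1
      fun w hw => hpos w (Finset.mem_of_mem_erase hw)
  refine ⟨a, ha, by omega, fun w hw hwa => ?_⟩
  have heq : ∑ w ∈ S.erase a, 1 = ∑ w ∈ S.erase a, f w := by
    simp only [Finset.sum_const, smul_eq_mul, mul_one]
    omega
  exact ((Finset.sum_eq_sum_iff_of_le
    fun w hw => hpos w (Finset.mem_of_mem_erase hw)).1 heq w
      (Finset.mem_erase.2 ⟨hwa, hw⟩)).symm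

/-- In a connected graph of diameter 3, two distinct vertices of the same part of a bipartition
have a common neighbor. -/
theorem SimpleGraph.exists_common_neighbor_of_diam_eq_three {V : Type*} {G : SimpleGraph V}
    {S : Set V} (hbip : ∀ u v, G.Adj u v → (u ∈ S ↔ v ∉ S)) (hconn : G.Connected)
    (hdiam : G.diam = 3) {u w : V} (hu : u ∈ S) (hw : w ∈ S) (hne : u ≠ w) :
    ∃ x, G.Adj u x ∧ G.Adj w x := by
  have hdist : G.dist u w ≤ 3 := hdiam ▸ SimpleGraph.dist_le_diam
    (SimpleGraph.ediam_ne_top_of_diam_ne_zero (by omega))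
  obtain ⟨p, hp⟩ := hconn.exists_walk_length_eq_dist u w
  rw [← hp] at hdist
  match p, hdist with
  | .nil, _ => exact absurd rfl hne
  | .cons h .nil, _ => exact absurd hw ((hbip _ _ h).1 hu)
  | .cons h (.cons h' .nil), _ => exact ⟨_, h, h'.symm⟩
  | .cons h (.cons h' (.cons h'' .nil)), _ =>
    have := hbip _ _ h
    have := hbip _ _ h'
    have := hbip _ _ h''
    tauto
  | .cons _ (.cons _ (.cons _ (.cons _ _))), hl =>
    simp only [SimpleGraph.Walk.length_cons] at hl
    omega

/-- Counting paths of length two from `u`: the sizes of the common neighborhoods of `u` with all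
the vertices of `S` add up to the product of the degrees. -/
theorem SimpleGraph.sum_card_inter_neighborFinset {V : Type*} [Fintype V] [DecidableEq V]
    (G : SimpleGraph V) [DecidableRel G.Adj] (S : Finset V) (u : V) (r : ℕ)
    (hsub : ∀ x ∈ G.neighborFinset u, G.neighborFinset x ⊆ S)
    (hdeg : ∀ x ∈ G.neighborFinset u, G.degree x = r) :
    ∑ w ∈ S, (G.neighborFinset u ∩ G.neighborFinset w).card = G.degree u * r := by
  have h := Finset.sum_card_bipartiteAbove_eq_sum_card_bipartiteBelow
    (s := S) (t := G.neighborFinset u) G.Adj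
  have habove : ∀ w, Finset.bipartiteAbove G.Adj (G.neighborFinset u) w =
      G.neighborFinset u ∩ G.neighborFinset w := fun w => by
    ext x
    simp [Finset.mem_bipartiteAbove]
  have hbelow : ∀ x ∈ G.neighborFinset u,
      (Finset.bipartiteBelow G.Adj S x).card = r := fun x hx => by
    rw [← hdeg x hx, ← G.card_neighborFinset_eq_degree]
    congr 1
    ext w
    have := @hsub x hx w
    simp only [Finset.mem_bipartiteBelow, SimpleGraph.mem_neighborFinset, G.adj_comm w x] at this ⊢
    tauto
  simp only [habove] at h
  rw [h, Finset.sum_congr rfl hbelow, Finset.sum_const, smul_eq_mul,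
    G.card_neighborFinset_eq_degree]

/-- If `G` is an `[r,s;3]`-bigraph (connected bipartite biregular with degrees `r ≥ s ≥ 2`
and diameter 3) with `|V2| = s(r-1)`, then every `u ∈ V2` has a unique repeat `u' ∈ V2`,
`u' ≠ u`, with `|N(u) ∩ N(u')| = 2`, and every other `w ∈ V2` has `|N(u) ∩ N(w)| = 1`. -/
theorem stmt_2 {V : Type*} [Fintype V] [DecidableEq V] (G : SimpleGraph V)
    [DecidableRel G.Adj]
    (V1 V2 : Finset V) (r s : ℕ) (hrs : s ≤ r) (hs : 2 ≤ s)
    (hpart : ∀ v : V, v ∈ V1 ↔ v ∉ V2)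
    (hbip : ∀ u v : V, G.Adj u v → (u ∈ V1 ∧ v ∈ V2) ∨ (u ∈ V2 ∧ v ∈ V1))
    (hconn : G.Connected)
    (hdeg1 : ∀ v ∈ V1, G.degree v = r)
    (hdeg2 : ∀ v ∈ V2, G.degree v = s)
    (hdiam : G.diam = 3)
    (hcard : V2.card = s * (r - 1)) :
    ∀ u ∈ V2, ∃ u' ∈ V2, u' ≠ u ∧
      (G.neighborFinset u ∩ G.neighborFinset u').card = 2 ∧
      ∀ w ∈ V2, w ≠ u → w ≠ u' →
        (G.neighborFinset u ∩ G.neighborFinset w).card = 1 := by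
  intro u hu
  have hV1 : ∀ x ∈ G.neighborFinset u, x ∈ V1 := fun x hx => by
    have := hbip u x ((G.mem_neighborFinset u x).1 hx)
    have := hpart u
    tauto
  have htotal := G.sum_card_inter_neighborFinset V2 u r
    (fun x hx w hw => by
      have := hbip x w ((G.mem_neighborFinset x w).1 hw)
      have := hpart x
      have := hV1 x hx
      tauto)
    (fun x hx => hdeg1 x (hV1 x hx))
  rw [← Finset.add_sum_erase V2 _ hu, Finset.inter_self, G.card_neighborFinset_eq_degree,
    hdeg2 u hu] at htotal
  have hpos : ∀ w ∈ V2.erase u, 1 ≤ (G.neighborFinset u ∩ G.neighborFinset w).card := by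
    intro w hw
    obtain ⟨hwu, hw⟩ := Finset.mem_erase.1 hw
    obtain ⟨x, hux, hwx⟩ := SimpleGraph.exists_common_neighbor_of_diam_eq_three
      (S := (V2 : Set V)) (fun a b hab => by
        have := hbip a b hab
        have := hpart a
        have := hpart b
        simp only [Finset.mem_coe]
        tauto) hconn hdiam hu hw hwu.symm
    exact Finset.card_pos.2 ⟨x, by simp [hux, hwx]⟩
  have hcard' := Finset.card_erase_add_one hu
  have hmul : s + s * (r - 1) = s * r := by
    obtain ⟨k, rfl⟩ : ∃ k, r = k + 1 := ⟨r - 1, by omega⟩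
    rw [Nat.add_sub_cancel]
    ring
  obtain ⟨a, ha, ha2, hothers⟩ :=
    Finset.exists_eq_two_of_sum_eq_card_add_one (V2.erase u) _ hpos (by omega)
  obtain ⟨hau, ha⟩ := Finset.mem_erase.1 ha
  exact ⟨a, ha, hau, ha2, fun w hw hwu hwa => hothers w (Finset.mem_erase.2 ⟨hwu, hw⟩) hwa⟩
end

section
/- Let s ≥ 3 and let ρ be an integer with s−1 ≤ ρ ≤ s²−s−3. Let G be a bipartite graph with parts V₁ and V₂ such that |V₁| = s²−1, |V₂| = ρ(s²−1), every vertex of V₁ has degree ρs, every vertex of V₂ has degree s, and G has diameter 3. Then there exist two distinct vertices v, v' ∈ V₁ such that |N(v) ∩ N(v')| ≥ ρ−s+3. -/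
/-- Counting walks of length two from `v` to other vertices: if `A` contains the neighbours of each
neighbour of `v`, the codegrees of `v` with the other vertices of `A` add up to the sum of
`deg w - 1` over the neighbours `w` of `v`. -/
theorem SimpleGraph.sum_card_inter_neighborFinset_erase {V : Type*} [Fintype V] [DecidableEq V]
    (G : SimpleGraph V) [DecidableRel G.Adj] (A : Finset V) (v : V)
    (hA : ∀ w ∈ G.neighborFinset v, G.neighborFinset w ⊆ A) :
    ∑ u ∈ A.erase v, (G.neighborFinset v ∩ G.neighborFinset u).card =
      ∑ w ∈ G.neighborFinset v, (G.degree w - 1) := by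
  have h := Finset.sum_card_bipartiteAbove_eq_sum_card_bipartiteBelow
    (s := A.erase v) (t := G.neighborFinset v) G.Adj
  have hl : ∀ u ∈ A.erase v, (G.neighborFinset v ∩ G.neighborFinset u).card =
      ((G.neighborFinset v).bipartiteAbove G.Adj u).card := fun u _ => by
    congr 1
    ext w
    simp [Finset.bipartiteAbove]
  have hr : ∀ w ∈ G.neighborFinset v,
      ((A.erase v).bipartiteBelow G.Adj w).card = G.degree w - 1 := fun w hw => by
    have hvw : v ∈ G.neighborFinset w := by simpa [G.adj_comm] using hw
    rw [← G.card_neighborFinset_eq_degree, ← Finset.card_erase_of_mem hvw]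
    congr 1
    ext u
    have hu : G.Adj w u → u ∈ A := fun hwu => hA w hw (by simpa using hwu)
    simp only [Finset.bipartiteBelow, Finset.mem_filter, Finset.mem_erase,
      SimpleGraph.mem_neighborFinset, G.adj_comm u w]
    tauto
  rw [Finset.sum_congr rfl hl, h, Finset.sum_congr rfl hr]

/-- If `s ≥ 3`, `s-1 ≤ ρ ≤ s²-s-3`, and `G` is a bipartite graph with parts `V1`
(size `s²-1`, degrees `ρs`) and `V2` (size `ρ(s²-1)`, degrees `s`) of diameter 3, then some
two distinct vertices of `V1` have at least `ρ-s+3` common neighbours. -/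
theorem stmt_6 {V : Type*} [Fintype V] [DecidableEq V] (G : SimpleGraph V)
    [DecidableRel G.Adj]
    (V1 V2 : Finset V) (s ρ : ℕ) (hs : 3 ≤ s) (hρ1 : s - 1 ≤ ρ) (hρ2 : ρ ≤ s ^ 2 - s - 3)
    (hpart : ∀ v : V, v ∈ V1 ↔ v ∉ V2)
    (hbip : ∀ u v : V, G.Adj u v → (u ∈ V1 ∧ v ∈ V2) ∨ (u ∈ V2 ∧ v ∈ V1))
    (hcard1 : V1.card = s ^ 2 - 1) (hcard2 : V2.card = ρ * (s ^ 2 - 1))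
    (hdeg1 : ∀ v ∈ V1, G.degree v = ρ * s)
    (hdeg2 : ∀ v ∈ V2, G.degree v = s)
    (hdiam : G.diam = 3) :
    ∃ v ∈ V1, ∃ v' ∈ V1, v ≠ v' ∧
      ρ + 3 - s ≤ (G.neighborFinset v ∩ G.neighborFinset v').card := by
  have hsq : 3 * s ≤ s ^ 2 := by nlinarith
  obtain ⟨v, hv⟩ : V1.Nonempty := Finset.card_pos.mp (by omega)
  have hV2 : ∀ w ∈ G.neighborFinset v, w ∈ V2 := fun w hw => by
    rcases hbip v w (by simpa using hw) with h | h
    · exact h.2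
    · exact absurd h.1 ((hpart v).1 hv)
  have hsum := G.sum_card_inter_neighborFinset_erase V1 v fun w hw u hu => by
    rcases hbip w u (by simpa using hu) with h | h
    · exact absurd (hV2 w hw) ((hpart w).1 h.1)
    · exact h.2
  have hdeg : ∑ w ∈ G.neighborFinset v, (G.degree w - 1) = ρ * s * (s - 1) := by
    rw [Finset.sum_congr rfl fun w hw => by rw [hdeg2 w (hV2 w hw)], Finset.sum_const,
      G.card_neighborFinset_eq_degree, hdeg1 v hv, smul_eq_mul]
  by_contra! hlt
  have hle : ∑ u ∈ V1.erase v, (G.neighborFinset v ∩ G.neighborFinset u).card ≤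
      (s ^ 2 - 1 - 1) * (ρ + 2 - s) := by
    rw [← hcard1, ← Finset.card_erase_of_mem hv, ← smul_eq_mul]
    refine Finset.sum_le_card_nsmul _ _ _ fun u hu => ?_
    have := hlt v hv u (Finset.mem_of_mem_erase hu) (Finset.ne_of_mem_erase hu).symm
    omega
  rw [hsum, hdeg, Nat.sub_sub] at hle
  have hρ : ρ + 3 ≤ s ^ 2 := by omega
  zify [show 1 ≤ s by omega, show 1 + 1 ≤ s ^ 2 by omega, show s ≤ ρ + 2 by omega] at hle hρ hs
  nlinarith [mul_le_mul_of_nonneg_left hρ (show (0 : ℤ) ≤ s - 2 by linarith)]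
end

section
/- Let q be a prime power, let s = q+1, and let n = s²−s+1 = q²+q+1. Then for every integer m ≥ 1 there exists a bipartite graph with parts V₀ and V₁ of sizes n and m·n respectively (so with (m+1)·n vertices in total), in which every vertex of V₀ has degree m·s, every vertex of V₁ has degree s, and whose diameter is 3. -/
open scoped Classical

namespace SimpleGraph

variable {V W : Type*} {G : SimpleGraph V} {H : SimpleGraph W}

/-- Graph homomorphisms do not increase extended distances. -/
theorem Hom.edist_le (f : G →g H) (u v : V) : H.edist (f u) (f v) ≤ G.edist u v :=
  le_iInf fun p => by simpa using (p.map f).edist_le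

/-- Isomorphic graphs have the same diameter. -/
theorem Iso.diam_eq (f : G ≃g H) : G.diam = H.diam := by
  refine congrArg ENat.toNat (le_antisymm (ediam_le_of_edist_le fun u v => ?_)
    (ediam_le_of_edist_le fun u v => ?_))
  · exact (by simpa using f.symm.toHom.edist_le (f u) (f v) :
      G.edist u v ≤ H.edist (f u) (f v)).trans edist_le_ediam
  · exact (by simpa using f.toHom.edist_le (f.symm u) (f.symm v) :
      H.edist u v ≤ G.edist (f.symm u) (f.symm v)).trans edist_le_ediam

end SimpleGraph

namespace Configuration

variable (P L ι : Type*) [Membership P L]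

/-- The point-line incidence graph in which every line is repeated once for each element
of `ι`. -/
def multiIncidenceGraph : SimpleGraph (P ⊕ ι × L) where
  Adj
    | .inl p, .inr l => p ∈ l.2
    | .inr l, .inl p => p ∈ l.2
    | _, _ => False
  symm := ⟨by rintro (p | l) (p' | l') h <;> exact h⟩
  loopless := ⟨by rintro (p | l) h <;> exact h⟩

variable {P L ι}

@[simp]
theorem not_multiIncidenceGraph_adj_inl_inl {p p' : P} :
    ¬ (multiIncidenceGraph P L ι).Adj (.inl p) (.inl p') :=
  id

@[simp]
theorem not_multiIncidenceGraph_adj_inr_inr {l l' : ι × L} :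
    ¬ (multiIncidenceGraph P L ι).Adj (.inr l) (.inr l') :=
  id

theorem degree_multiIncidenceGraph_inl [Fintype P] [Fintype L] [Fintype ι] (p : P) :
    (multiIncidenceGraph P L ι).degree (.inl p) = Fintype.card ι * lineCount L p := by
  rw [← SimpleGraph.card_neighborSet_eq_degree, ← Nat.card_eq_fintype_card,
    ← Nat.card_eq_fintype_card, lineCount, ← Nat.card_prod]
  refine Nat.card_congr
    { toFun := fun x => match x with
        | ⟨.inr l, h⟩ => (l.1, ⟨l.2, h⟩)
      invFun := fun x => ⟨.inr (x.1, x.2.1), x.2.2⟩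
      left_inv := ?_
      right_inv := fun _ => rfl }
  rintro ⟨p' | l, h⟩
  · exact h.elim
  · rfl

theorem degree_multiIncidenceGraph_inr [Fintype P] [Fintype L] [Fintype ι] (l : ι × L) :
    (multiIncidenceGraph P L ι).degree (.inr l) = pointCount P l.2 := by
  rw [← SimpleGraph.card_neighborSet_eq_degree, ← Nat.card_eq_fintype_card, pointCount]
  refine Nat.card_congr
    { toFun := fun x => match x with
        | ⟨.inl p, h⟩ => ⟨p, h⟩
      invFun := fun x => ⟨.inl x.1, x.2⟩
      left_inv := ?_
      right_inv := fun _ => rfl }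
  rintro ⟨p | l', h⟩
  · rfl
  · exact h.elim

open SimpleGraph in
theorem diam_multiIncidenceGraph [ProjectivePlane P L] [Finite P] [Finite L] [Nonempty ι] :
    (multiIncidenceGraph P L ι).diam = 3 := by
  obtain ⟨i⟩ := ‹Nonempty ι›
  have line_through (p : P) : ∃ l : L, p ∈ l := by
    have h := ProjectivePlane.two_lt_lineCount L p
    have : Nonempty {l : L // p ∈ l} := (Nat.card_pos_iff.mp (by unfold lineCount at h; omega)).1
    exact ⟨this.some.1, this.some.2⟩
  have point_on (l : L) : ∃ p : P, p ∈ l := by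
    have h := ProjectivePlane.two_lt_pointCount P l
    have : Nonempty {p : P // p ∈ l} := (Nat.card_pos_iff.mp (by unfold pointCount at h; omega)).1
    exact ⟨this.some.1, this.some.2⟩
  have line_through_pair (p p' : P) : ∃ l : L, p ∈ l ∧ p' ∈ l := by
    by_cases h : p = p'
    · subst h
      simpa using line_through p
    · exact ⟨_, HasLines.mkLine_ax h⟩
  have point_on_pair (l l' : L) : ∃ p : P, p ∈ l ∧ p ∈ l' := by
    by_cases h : l = l'
    · subst h
      simpa using point_on l
    · exact ⟨_, HasPoints.mkPoint_ax h⟩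
  have inl_inl (p p' : P) : (multiIncidenceGraph P L ι).edist (.inl p) (.inl p') ≤ 2 := by
    obtain ⟨l, h, h'⟩ := line_through_pair p p'
    exact (Walk.cons (G := multiIncidenceGraph P L ι) (u := Sum.inl p) (v := Sum.inr (i, l)) h
      (.cons (v := Sum.inl p') h' .nil)).edist_le
  have inr_inr (l l' : ι × L) : (multiIncidenceGraph P L ι).edist (.inr l) (.inr l') ≤ 2 := by
    obtain ⟨p, h, h'⟩ := point_on_pair l.2 l'.2
    exact (Walk.cons (G := multiIncidenceGraph P L ι) (u := Sum.inr l) (v := Sum.inl p) h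
      (.cons (v := Sum.inr l') h' .nil)).edist_le
  have inl_inr (p : P) (l : ι × L) :
      (multiIncidenceGraph P L ι).edist (.inl p) (.inr l) ≤ 3 := by
    obtain ⟨p', h⟩ := point_on l.2
    obtain ⟨l', h', h''⟩ := line_through_pair p p'
    exact (Walk.cons (G := multiIncidenceGraph P L ι) (u := Sum.inl p) (v := Sum.inr (i, l')) h'
      (.cons (v := Sum.inl p') h'' (.cons (v := Sum.inr l) h .nil))).edist_le
  have two_le_three : (2 : ℕ∞) ≤ 3 := by norm_num
  suffices h : (multiIncidenceGraph P L ι).ediam = 3 by rw [diam, h]; rfl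
  refine le_antisymm (ediam_le_of_edist_le ?_) ?_
  · rintro (p | l) (p' | l')
    · exact (inl_inl p p').trans two_le_three
    · exact inl_inr p l'
    · rw [SimpleGraph.edist_comm]
      exact inl_inr p' l
    · exact (inr_inr l l').trans two_le_three
  · obtain ⟨p, -, -, -, l, -, hpl, -⟩ := ProjectivePlane.exists_config (P := P) (L := L)
    have h : 2 < (multiIncidenceGraph P L ι).edist (.inl p) (.inr (i, l)) := by
      refine two_lt_edist_iff.mpr ⟨Sum.inl_ne_inr, hpl, Set.eq_empty_iff_forall_notMem.mpr ?_⟩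
      rintro (p' | l') ⟨h, h'⟩
      · exact h
      · exact h'
    exact (Order.add_one_le_of_lt h).trans edist_le_ediam

/-- A prime power is the order of a projective plane. -/
theorem exists_projectivePlane_order_eq {q : ℕ} (hq : IsPrimePow q) :
    ∃ (P L : Type) (_ : Fintype P) (_ : Fintype L) (_ : Membership P L)
      (_ : ProjectivePlane P L), ProjectivePlane.order P L = q := by
  obtain ⟨p, k, hp, hk, rfl⟩ := (isPrimePow_nat_iff q).mp hq
  have := Fact.mk hp
  let K := GaloisField p k
  let Q := Projectivization K (Fin 3 → K)
  have := Fintype.ofFinite Q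
  refine ⟨Q, Q, inferInstance, inferInstance, inferInstance, inferInstance, ?_⟩
  have h : Nat.card Q = ∑ i ∈ Finset.range 3, Nat.card K ^ i :=
    Projectivization.card_of_finrank K (Fin 3 → K) (by simp)
  rw [GaloisField.card p k hk.ne', Nat.card_eq_fintype_card,
    ProjectivePlane.card_points Q Q] at h
  simp only [Finset.sum_range_succ, Finset.sum_range_zero, pow_zero, pow_one] at h
  rcases lt_trichotomy (ProjectivePlane.order Q Q) (p ^ k) with hlt | heq | hgt
  · linarith [Nat.pow_lt_pow_left hlt two_ne_zero]
  · exact heq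
  · linarith [Nat.pow_lt_pow_left hgt two_ne_zero]

end Configuration

/-- For every prime power `q`, with `s = q+1` and `n = q²+q+1 = s²-s+1`, and every `m ≥ 1`,
there is a bipartite graph on `(m+1)·n` vertices with parts `V₀` of size `n` and `V₁` of
size `m·n`, where every vertex of `V₀` has degree `m·s`, every vertex of `V₁` has degree
`s`, and the diameter is 3. -/
theorem stmt_10 (q : ℕ) (hq : IsPrimePow q) (m : ℕ) (hm : 1 ≤ m) :
    ∃ (G : SimpleGraph (Fin ((m + 1) * (q ^ 2 + q + 1))))
      (V0 V1 : Finset (Fin ((m + 1) * (q ^ 2 + q + 1)))),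
      (∀ v, v ∈ V0 ↔ v ∉ V1) ∧
      (∀ u v, G.Adj u v → (u ∈ V0 ∧ v ∈ V1) ∨ (u ∈ V1 ∧ v ∈ V0)) ∧
      Fintype.card (Fin ((m + 1) * (q ^ 2 + q + 1))) = (m + 1) * (q ^ 2 + q + 1) ∧
      V0.card = q ^ 2 + q + 1 ∧
      V1.card = m * (q ^ 2 + q + 1) ∧
      (∀ v ∈ V0, G.degree v = m * (q + 1)) ∧
      (∀ v ∈ V1, G.degree v = q + 1) ∧
      G.diam = 3 := by
  obtain ⟨P, L, _, _, _, _, rfl⟩ := Configuration.exists_projectivePlane_order_eq hq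
  have hP := Configuration.ProjectivePlane.card_points P L
  have hL := Configuration.ProjectivePlane.card_lines P L
  have : Nonempty (Fin m) := ⟨⟨0, hm⟩⟩
  let e : P ⊕ Fin m × L ≃ Fin ((m + 1) * (Configuration.ProjectivePlane.order P L ^ 2 +
      Configuration.ProjectivePlane.order P L + 1)) :=
    Fintype.equivFinOfCardEq (by
      rw [Fintype.card_sum, Fintype.card_prod, Fintype.card_fin, hP, hL]; ring)
  let H := Configuration.multiIncidenceGraph P L (Fin m)
  obtain ⟨G, f, hf⟩ : ∃ G, ∃ f : H ≃g G, ∀ x, f x = e x :=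
    ⟨_, SimpleGraph.Iso.map e H, fun _ => rfl⟩
  refine ⟨G,
    Finset.univ.map (Function.Embedding.inl.trans e.toEmbedding),
    Finset.univ.map (Function.Embedding.inr.trans e.toEmbedding),
    ?_, ?_, Fintype.card_fin _, ?_, ?_, ?_, ?_, ?_⟩
  · intro v
    obtain ⟨p | l, rfl⟩ := e.surjective v <;> simp
  · intro u v
    obtain ⟨x, rfl⟩ := f.surjective u
    obtain ⟨y, rfl⟩ := f.surjective v
    rw [f.map_adj_iff]
    rcases x with p | l <;> rcases y with p' | l' <;> simp [hf, H]
  · simp [hP]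
  · simp [hL]
  · intro v hv
    obtain ⟨p, -, rfl⟩ := Finset.mem_map.mp hv
    change G.degree (e (.inl p)) = _
    rw [← hf, f.degree_eq, Configuration.degree_multiIncidenceGraph_inl, Fintype.card_fin,
      Configuration.ProjectivePlane.lineCount_eq]
  · intro v hv
    obtain ⟨l, -, rfl⟩ := Finset.mem_map.mp hv
    change G.degree (e (.inr l)) = _
    rw [← hf, f.degree_eq, Configuration.degree_multiIncidenceGraph_inr,
      Configuration.ProjectivePlane.pointCount_eq]
  · rw [← f.diam_eq]
    exact Configuration.diam_multiIncidenceGraph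
end

section
/- For every finite abelian group Γ whose order is 40, 41, or 42, there is no subset S ⊆ Γ of size 7 that is a covering difference set of Γ. Consequently, the maximum order of a finite abelian group admitting a covering difference set of size 7 is 39. -/
/-- `n` is the order of some finite abelian group admitting a covering difference set of
size 7 (a 7-element subset `S` such that every group element is a difference of two
elements of `S`). -/
def HasCoveringSet7 (n : ℕ) : Prop :=
  ∃ (Γ : Type) (_ : AddCommGroup Γ) (_ : Fintype Γ), Fintype.card Γ = n ∧
    ∃ S : Finset Γ, S.card = 7 ∧ ∀ g : Γ, ∃ t ∈ S, ∃ u ∈ S, g = t - u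

/-- The length of the shorter arc between the residues `x` and `y` modulo `n`. -/
def cyclicDist (n x y : ℕ) : ℕ :=
  bif Nat.ble (Nat.mul 2 (Nat.mod (Nat.sub (Nat.add x n) y) n)) n then
    Nat.mod (Nat.sub (Nat.add x n) y) n
  else Nat.sub n (Nat.mod (Nat.sub (Nat.add x n) y) n)

theorem cyclicDist_eq_of_mod {n x y c : ℕ} (h : (x + n - y) % n = c) :
    cyclicDist n x y = if 2 * c ≤ n then c else n - c := by
  subst h
  simp only [cyclicDist, Nat.ble_eq, Bool.cond_eq_ite]
  rfl

/-- The distances that appear when the elements of the second list are added one by one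
to the first list. -/
def newDists (n : ℕ) : List ℕ → List ℕ → List ℕ
  | _, [] => []
  | L, x :: M => L.map (cyclicDist n x) ++ newDists n (x :: L) M

/-- The number of repetitions met when the entries of a list are inserted one by one into the
set with bitmask `D`. -/
def repetitions : ℕ → List ℕ → ℕ
  | _, [] => 0
  | D, d :: l => if D.testBit d then repetitions D l + 1 else repetitions (D ||| 2 ^ d) l

/-- Insert the distances from `x` to the entries of a list into the bitmask `D`, answering `true`
if this meets more than `b` repetitions and passing to `next` the new mask and the remaining
budget otherwise. The explicit recursors make evaluation in the kernel fast. -/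
def insertDists (n x : ℕ) (next : ℕ → ℕ → Bool) (L : List ℕ) : ℕ → ℕ → Bool :=
  List.rec next
    (fun y _ ih D b =>
      Bool.rec (ih (Nat.lor D (Nat.pow 2 (cyclicDist n x y))) b)
        (Nat.rec true (fun c _ => ih D c) b)
        (Nat.beq (Nat.land 1 (Nat.shiftRight D (cyclicDist n x y))) 1)) L

/-- Backtracking search verifying that every way to extend `L` by `k` of the candidates in `C`
meets more than `b` repeated distances. -/
def noExtension (n : ℕ) (C : List ℕ) : ℕ → List ℕ → ℕ → ℕ → Bool :=
  List.rec (fun k _ _ _ => Nat.rec false (fun _ _ => true) k)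
    (fun x _ ih k L D b =>
      Nat.rec false
        (fun j _ => Bool.rec false (ih (j + 1) L D b) (insertDists n x (ih j (x :: L)) L D b)) k) C

theorem beq_land_shiftRight_eq_testBit (D d : ℕ) :
    Nat.beq (Nat.land 1 (Nat.shiftRight D d)) 1 = D.testBit d := by
  change Nat.beq (1 &&& D >>> d) 1 = (1 &&& D >>> d != 0)
  rw [Nat.land_comm, Nat.and_one_is_mod]
  rcases Nat.mod_two_eq_zero_or_one (D >>> d) with h | h <;> rw [h] <;> rfl

theorem card_filter_add_repetitions_le (l : List ℕ) (D : ℕ) :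
    (l.toFinset.filter fun d => D.testBit d = false).card + repetitions D l ≤ l.length := by
  induction l generalizing D with
  | nil => simp [repetitions]
  | cons d l ih =>
    by_cases h : D.testBit d = true
    · have := ih D
      have e : (d :: l).toFinset.filter (fun d => D.testBit d = false) =
          l.toFinset.filter fun d => D.testBit d = false := by
        simp [Finset.filter_insert, h]
      rw [e, repetitions, if_pos h, List.length_cons]
      omega
    · have := ih (D ||| 2 ^ d)
      have e : (d :: l).toFinset.filter (fun d => D.testBit d = false) ⊆
          insert d (l.toFinset.filter fun c => (D ||| 2 ^ d).testBit c = false) := by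
        intro c
        simp only [List.toFinset_cons, Finset.mem_filter, Finset.mem_insert, Nat.testBit_or,
          Nat.testBit_two_pow, Bool.or_eq_false_iff, decide_eq_false_iff_not]
        grind
      have := (Finset.card_le_card e).trans (Finset.card_insert_le _ _)
      rw [repetitions, if_neg h, List.length_cons]
      omega

theorem lt_repetitions_of_insertDists {n x : ℕ} {next : ℕ → ℕ → Bool} {l : List ℕ}
    (hnext : ∀ D b, next D b = true → b < repetitions D l) (L : List ℕ) (D b : ℕ)
    (h : insertDists n x next L D b = true) :
    b < repetitions D (L.map (cyclicDist n x) ++ l) := by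
  induction L generalizing D b with
  | nil => exact hnext D b h
  | cons y L ih =>
    rw [List.map_cons, List.cons_append, repetitions]
    change Bool.rec (insertDists n x next L (D ||| 2 ^ cyclicDist n x y) b)
      (Nat.rec true (fun c _ => insertDists n x next L D c) b)
      (Nat.beq (Nat.land 1 (Nat.shiftRight D (cyclicDist n x y))) 1) = true at h
    rw [beq_land_shiftRight_eq_testBit] at h
    cases hb : D.testBit (cyclicDist n x y) <;> rw [hb] at h
    · exact ih _ _ h
    · cases b with
      | zero => simp
      | succ b => simpa using ih _ _ h

theorem lt_repetitions_of_noExtension {n : ℕ} (C : List ℕ) (k : ℕ) (L : List ℕ) (D b : ℕ)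
    (h : noExtension n C k L D b = true) (M : List ℕ) (hM : M.Sublist C) (hk : M.length = k) :
    b < repetitions D (newDists n L M) := by
  induction C generalizing k L D b M with
  | nil =>
    cases k with
    | zero => simp [noExtension] at h
    | succ k => simp [List.sublist_nil.1 hM] at hk
  | cons x C ih =>
    cases k with
    | zero => simp [noExtension] at h
    | succ k =>
      replace h : insertDists n x (noExtension n C k (x :: L)) L D b = true ∧
          noExtension n C (k + 1) L D b = true := by
        cases hi : insertDists n x (noExtension n C k (x :: L)) L D b with
        | false =>
          simp only [noExtension] at h hi
          simp [hi] at h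
        | true =>
          simp only [noExtension] at h hi
          rw [hi] at h
          exact ⟨rfl, h⟩
      cases hM with
      | cons _ hM => exact ih _ _ _ _ h.2 M hM hk
      | cons_cons _ hM =>
        exact lt_repetitions_of_insertDists (fun D b hb => ih _ _ _ _ hb _ hM (by simpa using hk))
          _ _ _ h.1

theorem cyclicDist_mem_newDists {n : ℕ} {x y : ℕ} (hxy : x ≠ y) (M L : List ℕ)
    (hx : x ∈ M ∨ x ∈ L) (hy : y ∈ M ∨ y ∈ L) (h : x ∈ M ∨ y ∈ M) :
    cyclicDist n x y ∈ newDists n L M ∨ cyclicDist n y x ∈ newDists n L M := by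
  induction M generalizing L with
  | nil => simp at h
  | cons z M ih =>
    by_cases hM : x ∈ M ∨ y ∈ M
    · have := ih (z :: L) (by grind) (by grind) hM
      simp only [newDists, List.mem_append]
      tauto
    · simp only [newDists, List.mem_append, List.mem_map]
      grind

theorem length_newDists_five (n a b : ℕ) (M : List ℕ) (hM : M.length = 5) :
    (newDists n [a, b] M).length = 20 := by
  match M, hM with
  | [_, _, _, _, _], _ => simp [newDists]

theorem noExtension_forty : noExtension 40 (List.range' 2 38) 5 [1, 0] 2 1 = true := by
  decide +kernel

theorem noExtension_forty_one : noExtension 41 (List.range' 2 39) 5 [1, 0] 2 1 = true := by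
  decide +kernel

theorem noExtension_forty_two : noExtension 42 (List.range' 2 40) 5 [1, 0] 2 0 = true := by
  decide +kernel

theorem noExtension_forty_three : noExtension 43 (List.range' 2 41) 5 [1, 0] 2 0 = true := by
  decide +kernel

theorem not_covering_zmod {n b : ℕ} (hn : 4 ≤ n) (hb : 21 ≤ b + n / 2)
    (h : noExtension n (List.range' 2 (n - 2)) 5 [1, 0] 2 b = true) (S : Finset (ZMod n))
    (hS : S.card = 7) : ¬ ∀ g : ZMod n, ∃ t ∈ S, ∃ u ∈ S, g = t - u := by
  intro hcov
  have : NeZero n := ⟨by omega⟩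
  have : Fact (1 < n) := ⟨by omega⟩
  obtain ⟨t₁, ht₁, u₁, hu₁, h₁⟩ := hcov 1
  let T : Finset ℕ := S.image fun s => (s - u₁).val
  have hT : T.card = 7 := by
    rw [Finset.card_image_of_injective _ fun x y hxy => ?_, hS]
    exact sub_left_injective (ZMod.val_injective n hxy)
  have hT0 : 0 ∈ T := Finset.mem_image.2 ⟨u₁, hu₁, by simp⟩
  have hT1 : 1 ∈ T := Finset.mem_image.2 ⟨t₁, ht₁, by rw [← h₁, ZMod.val_one]⟩
  have hTn : ∀ x ∈ T, x < n := by
    intro x hx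
    obtain ⟨s, -, rfl⟩ := Finset.mem_image.1 hx
    exact ZMod.val_lt _
  let M := (List.range' 2 (n - 2)).filter (· ∈ T)
  have hM : ∀ x, x ∈ M ↔ x ∈ T ∧ x ≠ 0 ∧ x ≠ 1 := by
    intro x
    simp only [M, List.mem_filter, List.mem_range'_1, decide_eq_true_eq]
    have := hTn x
    grind
  have hMT : M.toFinset = (T.erase 0).erase 1 := by
    ext x
    simp only [List.mem_toFinset, hM, Finset.mem_erase]
    tauto
  have hMlen : M.length = 5 := by
    rw [← List.toFinset_card_of_nodup ((List.nodup_range').filter _), hMT,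
      Finset.card_erase_of_mem (by simp [hT1]), Finset.card_erase_of_mem hT0, hT]
  have hrep := lt_repetitions_of_noExtension _ _ _ _ _ h M List.filter_sublist hMlen
  have hcard := card_filter_add_repetitions_le (newDists n [1, 0] M) 2
  rw [length_newDists_five n 1 0 M hMlen] at hcard
  have hsub : Finset.Icc 2 (n / 2) ⊆
      (newDists n [1, 0] M).toFinset.filter fun d => Nat.testBit 2 d = false := by
    intro c hc
    obtain ⟨hc2, hcn⟩ := Finset.mem_Icc.1 hc
    obtain ⟨t, ht, u, hu, htu⟩ := hcov c
    have hx : (t - u₁).val ∈ T := Finset.mem_image_of_mem _ ht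
    have hy : (u - u₁).val ∈ T := Finset.mem_image_of_mem _ hu
    have hxn := hTn _ hx
    have hyn := hTn _ hy
    have hmod : ((t - u₁).val + n - (u - u₁).val) % n = c := by
      have e : (((t - u₁).val + n - (u - u₁).val : ℕ) : ZMod n) = (c : ZMod n) := by
        rw [Nat.cast_sub (by omega)]
        simp [htu]
      rw [ZMod.natCast_eq_natCast_iff] at e
      rw [e, Nat.mod_eq_of_lt (by omega)]
    generalize (t - u₁).val = x at *
    generalize (u - u₁).val = y at *
    have hmod' : (y + n - x) % n = n - c := by
      rcases le_or_gt y x with hyx | hyx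
      · rw [show x + n - y = x - y + n by omega, Nat.add_mod_right,
          Nat.mod_eq_of_lt (by omega)] at hmod
        rw [Nat.mod_eq_of_lt (by omega)]
        omega
      · rw [Nat.mod_eq_of_lt (by omega)] at hmod
        rw [show y + n - x = y - x + n by omega, Nat.add_mod_right,
          Nat.mod_eq_of_lt (by omega)]
        omega
    have hd : cyclicDist n x y = c := by
      rw [cyclicDist_eq_of_mod hmod, if_pos (by omega)]
    have hd' : cyclicDist n y x = c := by
      rw [cyclicDist_eq_of_mod hmod']
      split <;> omega
    have hxy : x ≠ y := by
      rintro rfl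
      simp at hmod
      omega
    have hnew : x ∈ M ∨ y ∈ M := by
      simp only [hM]
      by_contra hcon
      have hx' : x = 0 ∨ x = 1 := by tauto
      have hy' : y = 0 ∨ y = 1 := by tauto
      rcases hx' with rfl | rfl <;> rcases hy' with rfl | rfl
      · exact hxy rfl
      · rw [Nat.mod_eq_of_lt (by omega)] at hmod
        omega
      · rw [Nat.mod_eq_of_lt (by omega)] at hmod'
        omega
      · exact hxy rfl
    have hmem := cyclicDist_mem_newDists (n := n) hxy M [1, 0]
      (by simp only [hM, List.mem_cons]; tauto) (by simp only [hM, List.mem_cons]; tauto) hnew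
    rw [hd, hd', or_self] at hmem
    rw [Finset.mem_filter, List.mem_toFinset]
    refine ⟨hmem, ?_⟩
    change Nat.testBit (2 ^ 1) c = false
    rw [Nat.testBit_two_pow, decide_eq_false_iff_not]
    omega
  have := Finset.card_le_card hsub
  rw [Nat.card_Icc] at this
  omega

theorem not_covering_of_isAddCyclic {Γ : Type*} [AddCommGroup Γ] [Fintype Γ] [hΓ : IsAddCyclic Γ]
    (hcard : 40 ≤ Fintype.card Γ ∧ Fintype.card Γ ≤ 43) (S : Finset Γ) (hS : S.card = 7) :
    ¬ ∀ g : Γ, ∃ t ∈ S, ∃ u ∈ S, g = t - u := by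
  intro hcov
  have e := (zmodAddCyclicAddEquiv hΓ).symm
  rw [Nat.card_eq_fintype_card] at e
  generalize Fintype.card Γ = n at *
  have hS' : (S.map e.toEquiv.toEmbedding).card = 7 := by rw [Finset.card_map, hS]
  have hcov' : ∀ g : ZMod n, ∃ t ∈ S.map e.toEquiv.toEmbedding,
      ∃ u ∈ S.map e.toEquiv.toEmbedding, g = t - u := by
    intro g
    obtain ⟨t, ht, u, hu, h⟩ := hcov (e.symm g)
    refine ⟨e t, Finset.mem_map_of_mem _ ht, e u, Finset.mem_map_of_mem _ hu, ?_⟩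
    rw [← map_sub, ← h, e.apply_symm_apply]
  obtain rfl | rfl | rfl | rfl : n = 40 ∨ n = 41 ∨ n = 42 ∨ n = 43 := by omega
  · exact not_covering_zmod (by norm_num) (by norm_num) noExtension_forty _ hS' hcov'
  · exact not_covering_zmod (by norm_num) (by norm_num) noExtension_forty_one _ hS' hcov'
  · exact not_covering_zmod (by norm_num) (by norm_num) noExtension_forty_two _ hS' hcov'
  · exact not_covering_zmod (by norm_num) (by norm_num) noExtension_forty_three _ hS' hcov'

theorem exists_hom_zmod_two_of_not_isAddCyclic {Γ : Type*} [AddCommGroup Γ] [Fintype Γ]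
    (hcard : Fintype.card Γ = 40) (hΓ : ¬ IsAddCyclic Γ) :
    ∃ (χ : Γ →+ ZMod 2) (h : Γ), h + h = 0 ∧ χ h = 1 := by
  classical
  obtain ⟨ι, _, n, hn, ⟨e⟩⟩ := AddCommGroup.equiv_directSum_zmod_of_finite' Γ
  replace e := e.trans (DirectSum.addEquivProd fun i => ZMod (n i))
  have (i : ι) : NeZero (n i) := ⟨by have := hn i; omega⟩
  have hprod : ∏ i, n i = 40 := by
    rw [← hcard, Fintype.card_congr e.toEquiv, Fintype.card_pi]
    simp
  obtain ⟨i, -, hi⟩ : ∃ i ∈ Finset.univ, 2 ∣ n i :=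
    (Nat.prime_two.prime.dvd_finsetProd_iff n).1 (by rw [hprod]; norm_num)
  by_cases hfour : ∃ i, n i % 4 = 2
  · obtain ⟨i, hi⟩ := hfour
    refine ⟨((ZMod.castHom (by omega : 2 ∣ n i) (ZMod 2)).toAddMonoidHom.comp
      (Pi.evalAddMonoidHom _ i)).comp e.toAddMonoidHom,
      e.symm (Pi.single i ((n i / 2 : ℕ) : ZMod (n i))), ?_, ?_⟩
    · rw [← map_add, ← Pi.single_add, ← Nat.cast_add, show n i / 2 + n i / 2 = n i by omega]
      simp
    · simp only [RingHom.toAddMonoidHom_eq_coe, AddEquiv.toAddMonoidHom_eq_coe,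
        AddMonoidHom.coe_comp, AddMonoidHom.coe_coe, Function.comp_apply,
        AddEquiv.apply_symm_apply, Pi.evalAddMonoidHom_apply, Pi.single_eq_same, map_natCast]
      rw [show (1 : ZMod 2) = (1 : ℕ) by simp, ZMod.natCast_eq_natCast_iff]
      change _ % 2 = 1 % 2
      omega
  · exfalso
    apply hΓ
    push Not at hfour
    have h4 : 4 ∣ n i := by
      have := hfour i
      omega
    have hrest : n i * ∏ j ∈ Finset.univ.erase i, n j = 40 := by
      rw [Finset.mul_prod_erase _ _ (Finset.mem_univ i), hprod]
    have hodd : ¬ 2 ∣ ∏ j ∈ Finset.univ.erase i, n j := by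
      rw [Nat.prime_two.prime.dvd_finsetProd_iff]
      rintro ⟨j, hj, hj2⟩
      have hj4 : 4 ∣ n j := by
        have := hfour j
        omega
      have := mul_dvd_mul h4 (hj4.trans (Finset.dvd_prod_of_mem n hj))
      rw [hrest] at this
      norm_num at this
    have h8 : 8 ∣ n i := by
      refine Nat.Coprime.dvd_of_dvd_mul_right (n := ∏ j ∈ Finset.univ.erase i, n j) ?_
        (by rw [hrest]; norm_num)
      exact Nat.Coprime.pow_left 3 ((Nat.Prime.coprime_iff_not_dvd Nat.prime_two).2 hodd)
    have hexp8 : 8 ∣ AddMonoid.exponent Γ := by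
      refine h8.trans ((ZMod.natCast_eq_zero_iff _ _).1 ?_)
      have h0 := congrArg (fun x => e x i)
        (AddMonoid.exponent_nsmul_eq_zero (e.symm (Pi.single i (1 : ZMod (n i)))))
      simpa using h0
    have hexp5 : 5 ∣ AddMonoid.exponent Γ := by
      have : Fact (Nat.Prime 5) := ⟨by norm_num⟩
      obtain ⟨x, hx⟩ := exists_prime_addOrderOf_dvd_card (G := Γ) 5 (by rw [hcard]; norm_num)
      rw [← hx]
      exact AddMonoid.addOrder_dvd_exponent x
    apply IsAddCyclic.of_exponent_eq_card
    rw [Nat.card_eq_fintype_card, hcard]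
    apply Nat.dvd_antisymm
    · rw [← hcard]
      exact AddGroup.exponent_dvd_card
    · exact Nat.Coprime.mul_dvd_of_dvd_of_dvd (by norm_num) hexp8 hexp5

theorem isAddCyclic_of_squarefree_card {Γ : Type*} [AddCommGroup Γ] [Fintype Γ]
    (h : Squarefree (Fintype.card Γ)) : IsAddCyclic Γ := by
  apply IsAddCyclic.of_exponent_eq_card
  rw [Nat.card_eq_fintype_card]
  apply Nat.dvd_antisymm AddGroup.exponent_dvd_card
  rw [← Nat.prod_primeFactors_of_squarefree h]
  refine Finset.prod_primes_dvd _ (fun p hp => (Nat.prime_of_mem_primeFactors hp).prime) ?_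
  intro p hp
  have : Fact p.Prime := ⟨Nat.prime_of_mem_primeFactors hp⟩
  obtain ⟨x, hx⟩ := exists_prime_addOrderOf_dvd_card (G := Γ) p (Nat.dvd_of_mem_primeFactors hp)
  rw [← hx]
  exact AddMonoid.addOrder_dvd_exponent x

theorem not_covering_of_hom_zmod_two {Γ : Type*} [AddCommGroup Γ] [Fintype Γ]
    (hcard : Fintype.card Γ = 40) (χ : Γ →+ ZMod 2) (h : Γ) (hh : h + h = 0) (hχ : χ h = 1)
    (S : Finset Γ) (hS : S.card = 7) : ¬ ∀ g : Γ, ∃ t ∈ S, ∃ u ∈ S, g = t - u := by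
  classical
  intro hcov
  have hval : ∀ z : ZMod 2, z ≠ 0 ↔ z = 1 := by decide
  let K : Finset Γ := Finset.univ.filter fun g => χ g = 0
  let N : Finset Γ := Finset.univ.filter fun g => ¬ χ g = 0
  have hKN : K.card + N.card = 40 := by
    rw [Finset.card_filter_add_card_filter_not, Finset.card_univ, hcard]
  have hKN' : K.card = N.card := by
    refine Finset.card_bij (fun g _ => g + h) ?_ (fun _ _ _ _ => add_right_cancel) ?_
    · intro g hg
      simp_all [K, N]
    · intro g hg
      refine ⟨g + h, ?_, by rw [add_assoc, hh, add_zero]⟩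
      simp only [N, K, Finset.mem_filter, Finset.mem_univ, true_and, hval] at hg ⊢
      rw [map_add, hg, hχ]
      rfl
  let A := S.filter fun g => χ g = 0
  let B := S.filter fun g => ¬ χ g = 0
  have hAB : A.card + B.card = 7 := by
    rw [Finset.card_filter_add_card_filter_not, hS]
  have hK : K.erase 0 ⊆ (A.offDiag ∪ B.offDiag).image fun p => p.1 - p.2 := by
    intro g hg
    obtain ⟨t, ht, u, hu, rfl⟩ := hcov g
    simp only [K, Finset.mem_erase, Finset.mem_filter, Finset.mem_univ, true_and, map_sub,
      sub_eq_zero] at hg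
    refine Finset.mem_image.2 ⟨(t, u), ?_, rfl⟩
    simp only [A, B, Finset.mem_union, Finset.mem_offDiag, Finset.mem_filter]
    have htu : t ≠ u := fun h => hg.1 (sub_eq_zero.2 h)
    have := hg.2
    by_cases hu0 : χ u = 0 <;> simp_all
  let F := (A ×ˢ B).image fun p => p.1 - p.2
  have hF : F.card ≤ A.card * B.card := by
    rw [← Finset.card_product]
    exact Finset.card_image_le
  have hN : N ⊆ F ∪ F.image Neg.neg := by
    intro g hg
    obtain ⟨t, ht, u, hu, rfl⟩ := hcov g
    simp only [N, Finset.mem_filter, Finset.mem_univ, true_and, map_sub, sub_eq_zero] at hg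
    by_cases hu0 : χ u = 0
    · refine Finset.mem_union_right _ (Finset.mem_image.2 ⟨u - t, ?_, neg_sub _ _⟩)
      refine Finset.mem_image.2 ⟨(u, t), ?_, rfl⟩
      simp_all [A, B]
    · refine Finset.mem_union_left _ (Finset.mem_image.2 ⟨(t, u), ?_, rfl⟩)
      have ht0 : χ t = 0 := by
        by_contra ht0
        exact hg (((hval _).1 ht0).trans ((hval _).1 hu0).symm)
      simp_all [A, B]
  have hneg : -h = h := neg_eq_of_add_eq_zero_left hh
  have hmem : h ∈ F ∩ F.image Neg.neg := by
    have hhN : h ∈ N := by simp [N, hχ]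
    rw [Finset.mem_inter]
    rcases Finset.mem_union.1 (hN hhN) with hhF | hhF
    · exact ⟨hhF, Finset.mem_image.2 ⟨h, hhF, hneg⟩⟩
    · obtain ⟨f, hf, hfh⟩ := Finset.mem_image.1 hhF
      have : f = h := by rw [← hneg, ← hfh, neg_neg]
      exact ⟨this ▸ hf, hhF⟩
  have h1 := Finset.card_le_card hN
  have h2 := Finset.card_union_add_card_inter F (F.image Neg.neg)
  have h3 : (F.image Neg.neg).card ≤ F.card := Finset.card_image_le
  have h4 := Finset.card_pos.2 ⟨h, hmem⟩
  have h5 := (Finset.card_le_card hK).trans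
    (Finset.card_image_le.trans (Finset.card_union_le _ _))
  rw [Finset.card_erase_of_mem (by simp [K]), Finset.offDiag_card, Finset.offDiag_card] at h5
  have hB : B.card = 7 - A.card := by omega
  have hA : A.card ≤ 7 := by omega
  rw [hB] at h5 hF
  interval_cases A.card <;> omega

theorem card_le_of_covering {Γ : Type*} [AddCommGroup Γ] [Fintype Γ] (S : Finset Γ)
    (hS : ∀ g : Γ, ∃ t ∈ S, ∃ u ∈ S, g = t - u) :
    Fintype.card Γ ≤ S.card * S.card - S.card + 1 := by
  classical
  have hsub : (Finset.univ : Finset Γ) ⊆ insert 0 (S.offDiag.image fun p => p.1 - p.2) := by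
    intro g _
    obtain ⟨t, ht, u, hu, rfl⟩ := hS g
    by_cases h : t = u
    · simp [h]
    · exact Finset.mem_insert_of_mem
        (Finset.mem_image.2 ⟨(t, u), Finset.mem_offDiag.2 ⟨ht, hu, h⟩, rfl⟩)
  rw [← Finset.card_univ, ← Finset.offDiag_card]
  exact (Finset.card_le_card hsub).trans ((Finset.card_insert_le _ _).trans
    (Nat.add_le_add_right Finset.card_image_le 1))

theorem covering_zmod_thirty_nine :
    ∀ g : ZMod 39, ∃ t ∈ ({0, 1, 2, 4, 13, 18, 33} : Finset (ZMod 39)),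
      ∃ u ∈ ({0, 1, 2, 4, 13, 18, 33} : Finset (ZMod 39)), g = t - u := by
  decide

theorem not_covering_of_card {Γ : Type*} [AddCommGroup Γ] [Fintype Γ]
    (hcard : 40 ≤ Fintype.card Γ) (S : Finset Γ) (hS : S.card = 7) :
    ¬ ∀ g : Γ, ∃ t ∈ S, ∃ u ∈ S, g = t - u := by
  intro hcov
  have hle := card_le_of_covering S hcov
  rw [hS] at hle
  by_cases hcyc : IsAddCyclic Γ
  · exact not_covering_of_isAddCyclic ⟨hcard, by omega⟩ S hS hcov
  obtain h40 | h40 := hcard.eq_or_lt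
  · obtain ⟨χ, h, hh, hχ⟩ := exists_hom_zmod_two_of_not_isAddCyclic h40.symm hcyc
    exact not_covering_of_hom_zmod_two h40.symm χ h hh hχ S hS hcov
  · refine hcyc (isAddCyclic_of_squarefree_card ?_)
    generalize Fintype.card Γ = n at *
    obtain rfl | rfl | rfl : n = 41 ∨ n = 42 ∨ n = 43 := by omega
    all_goals decide +kernel

/-- No finite abelian group of order 40, 41, or 42 admits a covering difference set of
size 7; consequently, the maximum order of a finite abelian group admitting a covering
difference set of size 7 is 39. -/
theorem stmt_16 :
    (∀ (Γ : Type) (_ : AddCommGroup Γ) (_ : Fintype Γ),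
      (Fintype.card Γ = 40 ∨ Fintype.card Γ = 41 ∨ Fintype.card Γ = 42) →
      ¬ ∃ S : Finset Γ, S.card = 7 ∧ ∀ g : Γ, ∃ t ∈ S, ∃ u ∈ S, g = t - u) ∧
    IsGreatest {n : ℕ | HasCoveringSet7 n} 39 := by
  refine ⟨?_, ?_, ?_⟩
  · rintro Γ _ _ hcard ⟨S, hS, hcov⟩
    exact not_covering_of_card (by omega) S hS hcov
  · exact ⟨ZMod 39, inferInstance, inferInstance, ZMod.card 39,
      {0, 1, 2, 4, 13, 18, 33}, by decide, covering_zmod_thirty_nine⟩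
  · rintro n ⟨Γ, _, _, rfl, S, hS, hcov⟩
    by_contra! hlt
    exact not_covering_of_card (by omega) S hS hcov
end

section
/- There exists a finite group Γ of order 40 and a subset S ⊆ Γ of size 7 such that both S and the set of inverses S̄ = {t⁻¹ : t ∈ S} are covering difference sets of Γ. (Such a group is the non-abelian semidirect product of ℤ/5ℤ by ℤ/8ℤ given by the presentation ⟨a, b | a⁵ = b⁸ = 1, b a b⁻¹ = a²⟩, with S = {1, b, b⁴, ba, ba⁻¹b², ab⁻¹, bab²}.) -/
/-- The semidirect product `⟨a, b ∣ a⁵ = b⁸ = 1, b * a * b⁻¹ = a²⟩` of `ℤ/5ℤ` by `ℤ/8ℤ`;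
the pair `(x, i)` stands for `a ^ x * b ^ i`. -/
@[ext]
structure SemidirectFiveEight where
  /-- The exponent of `a`. -/
  fst : ZMod 5
  /-- The exponent of `b`. -/
  snd : ZMod 8

namespace SemidirectFiveEight

/-- The underlying set is the product `ℤ/5ℤ × ℤ/8ℤ`. -/
def equivProd : SemidirectFiveEight ≃ ZMod 5 × ZMod 8 where
  toFun p := (p.fst, p.snd)
  invFun p := ⟨p.1, p.2⟩

instance : DecidableEq SemidirectFiveEight := equivProd.decidableEq

instance : Fintype SemidirectFiveEight := Fintype.ofEquiv _ equivProd.symm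

/-- The multiplier by which `b ^ i` acts on `ℤ/5ℤ` under conjugation. -/
def twist (i : ZMod 8) : ZMod 5 := 2 ^ i.val

theorem twist_add : ∀ i j : ZMod 8, twist (i + j) = twist i * twist j := by decide

theorem twist_zero : twist 0 = 1 := by decide

instance : Mul SemidirectFiveEight := ⟨fun p q => ⟨p.fst + twist p.snd * q.fst, p.snd + q.snd⟩⟩

instance : One SemidirectFiveEight := ⟨⟨0, 0⟩⟩

instance : Inv SemidirectFiveEight := ⟨fun p => ⟨-(twist (-p.snd) * p.fst), -p.snd⟩⟩

theorem mul_def (p q : SemidirectFiveEight) :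
    p * q = ⟨p.fst + twist p.snd * q.fst, p.snd + q.snd⟩ := rfl

theorem one_def : (1 : SemidirectFiveEight) = ⟨0, 0⟩ := rfl

theorem inv_def (p : SemidirectFiveEight) : p⁻¹ = ⟨-(twist (-p.snd) * p.fst), -p.snd⟩ := rfl

instance : Group SemidirectFiveEight :=
  Group.ofLeftAxioms
    (fun p q r => by ext <;> simp only [mul_def, twist_add] <;> ring)
    (fun p => by ext <;> simp [mul_def, one_def, twist_zero])
    (fun p => by ext <;> simp [mul_def, one_def, inv_def])

/-- The generator `a`, of order 5. -/
def a : SemidirectFiveEight := ⟨1, 0⟩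

/-- The generator `b`, of order 8. -/
def b : SemidirectFiveEight := ⟨0, 1⟩

/-- The set `{1, b, b⁴, ba, ba⁻¹b², ab⁻¹, bab²}`. -/
def coveringSet : Finset SemidirectFiveEight :=
  {1, b, b ^ 4, b * a, b * a⁻¹ * b ^ 2, a * b⁻¹, b * a * b ^ 2}

end SemidirectFiveEight

/-- There is a finite group `Γ` of order 40 together with a 7-element subset `S ⊆ Γ` such
that both `S` and its set of inverses `S̄ = {t⁻¹ : t ∈ S}` are covering difference sets of
`Γ` (every `g ∈ Γ` is of the form `t·u⁻¹` with `t, u` in the set). Such a group is the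
nonabelian semidirect product `⟨a, b ∣ a⁵ = b⁸ = 1, b·a·b⁻¹ = a²⟩` with
`S = {1, b, b⁴, ba, ba⁻¹b², ab⁻¹, bab²}`. -/
theorem stmt_18 :
    ∃ (Γ : Type) (_ : Group Γ) (_ : Fintype Γ) (_ : DecidableEq Γ),
      Fintype.card Γ = 40 ∧
      ∃ S : Finset Γ, S.card = 7 ∧
        (∀ g : Γ, ∃ t ∈ S, ∃ u ∈ S, g = t * u⁻¹) ∧
        (∀ g : Γ, ∃ t ∈ S.image (·⁻¹), ∃ u ∈ S.image (·⁻¹), g = t * u⁻¹) := by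
  refine ⟨SemidirectFiveEight, inferInstance, inferInstance, inferInstance, by decide +kernel,
    SemidirectFiveEight.coveringSet, by decide +kernel, by decide +kernel, by decide +kernel⟩
end
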